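/- Let p > 1 and a, b, L > 0, and let u be a C¹ weak solution of −Δ^{a,b}_p u = λ^{a,b}_{1,p}(0,L) |u|^{p−2} u on (0,L) with u(0) = u(L) = 0 and u > 0 on (0,L). Set t₀ = aL/(a+b). Then u'(t) > 0 for every t ∈ (0, t₀), u'(t₀) = 0, and u'(t) < 0 for every t ∈ (t₀, L); in particular t₀ is the unique critical point of u in (0,L). -/

import Mathlib

open Set

/-- `u` is C¹ on `[α, γ]` with derivative `u'` there. -/
def C1On (α γ : ℝ) (u u' : ℝ → ℝ) : Prop :=
  (∀ t ∈ Set.Icc α γ, HasDerivWithinAt u (u' t) (Set.Icc α γ) t) ∧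
  ContinuousOn u' (Set.Icc α γ)

/-- Admissible functions on `[0, L]`: C¹ with zero boundary values. -/
def Adm (L : ℝ) (u u' : ℝ → ℝ) : Prop :=
  C1On 0 L u u' ∧ u 0 = 0 ∧ u L = 0

/-- The asymmetric energy integrand `a^p (s⁺)^p + b^p (s⁻)^p`. -/
noncomputable def asymE (p a b s : ℝ) : ℝ :=
  a ^ p * (max s 0) ^ p + b ^ p * (max (-s) 0) ^ p

/-- The asymmetric flux `a^p (s⁺)^(p-1) - b^p (s⁻)^(p-1)`. -/
noncomputable def asymFlux (p a b s : ℝ) : ℝ :=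
  a ^ p * (max s 0) ^ (p - 1) - b ^ p * (max (-s) 0) ^ (p - 1)

/-- The first Dirichlet eigenvalue `λ^{a,b}_{1,p}(0,L)`, as the infimum of the
asymmetric energy over normalized admissible functions. -/
noncomputable def lam1 (p a b L : ℝ) : ℝ :=
  sInf { E : ℝ | ∃ u u' : ℝ → ℝ, Adm L u u' ∧
    (∫ t in (0:ℝ)..L, |u t| ^ p) = 1 ∧
    E = ∫ t in (0:ℝ)..L, asymE p a b (u' t) }

/-- `u` (a C¹ function on `[0,L]` with derivative `u'` and zero boundary values)
is a weak solution of `-Δ^{a,b}_p u = g` on `(0,L)`. -/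
def IsWeakSol (p a b L : ℝ) (u u' g : ℝ → ℝ) : Prop :=
  Adm L u u' ∧
  ∀ φ φ' : ℝ → ℝ, Adm L φ φ' →
    (∫ t in (0:ℝ)..L, asymFlux p a b (u' t) * φ' t) =
      ∫ t in (0:ℝ)..L, g t * φ t

/-!
By the du Bois-Reymond lemma the flux `w = asymFlux p a b u'` is C¹ with `w' = -f(u)`, where `f` is
the nonlinearity. Testing the equation with `u` shows that `f(u) > 0` inside the interval, so `u'`
is strictly decreasing and vanishes at exactly one point `τ`.

As `u'` need not be differentiable where it vanishes, energy conservation is read off the Legendre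
dual: with `q` conjugate to `p`, `asymE p a b u' = asymE q a⁻¹ b⁻¹ w`, whose derivative is
`q u' w' = -q f(u) u'`. Hence `a u'` before `τ` and `-b u'` after `τ` are one and the same function
`h(u)`, and substituting `r = u(t)` in both travel times gives `τ / a = ∫ dr / h(r) = (L - τ) / b`,
that is `τ = a L / (a + b)`.
-/

section Flux

variable {p q a b s : ℝ}

lemma asymE_neg (p a b s : ℝ) : asymE p a b (-s) = asymE p b a s := by
  simp only [asymE, neg_neg, add_comm]

lemma asymFlux_neg (p a b s : ℝ) : asymFlux p a b (-s) = -asymFlux p b a s := by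
  simp only [asymFlux, neg_neg, neg_sub]

lemma asymE_of_nonneg (b : ℝ) (hp : 1 < p) (ha : 0 ≤ a) (hs : 0 ≤ s) :
    asymE p a b s = (a * s) ^ p := by
  rw [asymE, max_eq_left hs, max_eq_right (neg_nonpos.2 hs), Real.zero_rpow (by linarith),
    mul_zero, add_zero, Real.mul_rpow ha hs]

lemma asymE_of_nonpos (a : ℝ) (hp : 1 < p) (hb : 0 ≤ b) (hs : s ≤ 0) :
    asymE p a b s = (b * -s) ^ p := by
  rw [← asymE_of_nonneg a hp hb (neg_nonneg.2 hs), asymE_neg]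

lemma asymFlux_of_nonneg (a b : ℝ) (hp : 1 < p) (hs : 0 ≤ s) :
    asymFlux p a b s = a ^ p * s ^ (p - 1) := by
  rw [asymFlux, max_eq_left hs, max_eq_right (neg_nonpos.2 hs), Real.zero_rpow (by linarith),
    mul_zero, sub_zero]

lemma asymFlux_zero (a b : ℝ) (hp : 1 < p) : asymFlux p a b 0 = 0 := by
  rw [asymFlux_of_nonneg a b hp le_rfl, Real.zero_rpow (by linarith), mul_zero]

lemma continuous_max_zero_rpow {r : ℝ} (hr : 0 ≤ r) : Continuous fun s : ℝ => max s 0 ^ r :=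
  (continuous_id.max continuous_const).rpow_const fun _ => Or.inr hr

lemma hasDerivAt_max_zero_rpow (hp : 1 < p) (s : ℝ) :
    HasDerivAt (fun s : ℝ => max s 0 ^ p) (p * max s 0 ^ (p - 1)) s := by
  refine hasDerivAt_of_hasDerivAt_of_ne' (x := 0) (g := fun t => p * max t 0 ^ (p - 1))
    (fun t ht => ?_) (continuous_max_zero_rpow (by linarith)).continuousAt
    (continuous_const.mul (continuous_max_zero_rpow (by linarith))).continuousAt s
  rcases ht.lt_or_gt with ht | ht
  · rw [max_eq_right ht.le, Real.zero_rpow (by linarith), mul_zero]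
    refine (hasDerivAt_const t 0).congr_of_eventuallyEq ?_
    filter_upwards [Iio_mem_nhds ht] with r hr
    rw [max_eq_right (mem_Iio.1 hr).le, Real.zero_rpow (by linarith)]
  · rw [max_eq_left ht.le]
    refine (Real.hasDerivAt_rpow_const (Or.inl ht.ne')).congr_of_eventuallyEq ?_
    filter_upwards [Ioi_mem_nhds ht] with r hr
    rw [max_eq_left (mem_Ioi.1 hr).le]

lemma hasDerivAt_asymE (a b : ℝ) (hp : 1 < p) (s : ℝ) :
    HasDerivAt (asymE p a b) (p * asymFlux p a b s) s := by
  have hpos := (hasDerivAt_max_zero_rpow hp s).const_mul (a ^ p)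
  have hneg := ((hasDerivAt_max_zero_rpow hp (-s)).comp s (hasDerivAt_neg s)).const_mul (b ^ p)
  refine (hpos.add hneg).congr_deriv ?_
  rw [asymFlux]
  ring

lemma continuous_asymFlux (a b : ℝ) (hp : 1 < p) : Continuous (asymFlux p a b) :=
  (continuous_const.mul (continuous_max_zero_rpow (by linarith))).sub
    (continuous_const.mul ((continuous_max_zero_rpow (by linarith)).comp continuous_neg))

lemma strictMono_asymFlux (hp : 1 < p) (ha : 0 < a) (hb : 0 < b) :
    StrictMono (asymFlux p a b) := by
  have strictMonoOn_Ici {a b : ℝ} (ha : 0 < a) : StrictMonoOn (asymFlux p a b) (Ici 0) := by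
    intro s hs t ht hst
    rw [asymFlux_of_nonneg a b hp hs, asymFlux_of_nonneg a b hp ht]
    exact mul_lt_mul_of_pos_left (Real.rpow_lt_rpow hs hst (by linarith))
      (Real.rpow_pos_of_pos ha p)
  refine StrictMonoOn.Iic_union_Ici (a := 0) (fun s hs t ht hst => ?_) (strictMonoOn_Ici ha)
  rw [← neg_lt_neg_iff, ← asymFlux_neg, ← asymFlux_neg]
  exact strictMonoOn_Ici hb (mem_Ici.2 (neg_nonneg.2 ht)) (mem_Ici.2 (neg_nonneg.2 hs))
    (neg_lt_neg hst)

lemma asymFlux_pos_iff (hp : 1 < p) (ha : 0 < a) (hb : 0 < b) :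
    0 < asymFlux p a b s ↔ 0 < s := by
  simpa only [asymFlux_zero a b hp] using (strictMono_asymFlux hp ha hb).lt_iff_lt (a := 0) (b := s)

lemma asymFlux_mul_self_pos (hp : 1 < p) (ha : 0 < a) (hb : 0 < b) (hs : s ≠ 0) :
    0 < asymFlux p a b s * s := by
  rcases hs.lt_or_gt with hs | hs
  · refine mul_pos_of_neg_of_neg ?_ hs
    rw [← asymFlux_zero a b hp]
    exact strictMono_asymFlux hp ha hb hs
  · exact mul_pos ((asymFlux_pos_iff hp ha hb).2 hs) hs

lemma abs_rpow_sub_two_mul_self (hp : 1 < p) (s : ℝ) : |s| ^ (p - 2) * s = asymFlux p 1 1 s := by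
  have of_nonneg {s : ℝ} (hs : 0 ≤ s) : |s| ^ (p - 2) * s = asymFlux p 1 1 s := by
    rw [asymFlux_of_nonneg 1 1 hp hs, Real.one_rpow, one_mul, abs_of_nonneg hs,
      ← Real.rpow_add_one' hs (by linarith)]
    ring_nf
  rcases le_total 0 s with hs | hs
  · exact of_nonneg hs
  · simpa only [abs_neg, mul_neg, asymFlux_neg, neg_inj] using of_nonneg (neg_nonneg.2 hs)

lemma asymFlux_inv_asymFlux (hpq : p.HolderConjugate q) (ha : 0 < a) (hb : 0 < b) (s : ℝ) :
    asymFlux q a⁻¹ b⁻¹ (asymFlux p a b s) = s := by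
  have of_nonneg {a b s : ℝ} (ha : 0 < a) (hs : 0 ≤ s) :
      asymFlux q a⁻¹ b⁻¹ (asymFlux p a b s) = s := by
    rw [asymFlux_of_nonneg a b hpq.lt hs, asymFlux_of_nonneg _ _ hpq.symm.lt (by positivity),
      Real.mul_rpow (by positivity) (by positivity), ← Real.rpow_mul ha.le, ← Real.rpow_mul hs,
      mul_sub_one p, hpq.mul_eq_add, add_sub_cancel_left, Real.inv_rpow ha.le,
      inv_mul_cancel_left₀ (Real.rpow_pos_of_pos ha q).ne', mul_sub_one, hpq.sub_one_mul_conj,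
      sub_sub_cancel, Real.rpow_one]
  rcases le_total 0 s with hs | hs
  · exact of_nonneg ha hs
  · simpa only [asymFlux_neg, neg_inj] using of_nonneg (b := a) hb (neg_nonneg.2 hs)

lemma asymE_inv_asymFlux (hpq : p.HolderConjugate q) (ha : 0 < a) (hb : 0 < b) (s : ℝ) :
    asymE q a⁻¹ b⁻¹ (asymFlux p a b s) = asymE p a b s := by
  have of_nonneg {a b s : ℝ} (ha : 0 < a) (hs : 0 ≤ s) :
      asymE q a⁻¹ b⁻¹ (asymFlux p a b s) = asymE p a b s := by
    rw [asymFlux_of_nonneg a b hpq.lt hs, asymE_of_nonneg _ hpq.symm.lt (by positivity)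
      (by positivity), asymE_of_nonneg _ hpq.lt ha.le hs, ← mul_assoc, ← Real.rpow_neg_one a,
      ← Real.rpow_add ha, neg_add_eq_sub, Real.mul_rpow (by positivity) (by positivity),
      ← Real.rpow_mul ha.le, ← Real.rpow_mul hs, hpq.sub_one_mul_conj, Real.mul_rpow ha.le hs]
  rcases le_total 0 s with hs | hs
  · exact of_nonneg ha hs
  · simpa only [asymFlux_neg, asymE_neg] using of_nonneg (b := a) hb (neg_nonneg.2 hs)

end Flux

namespace C1On

variable {α γ : ℝ} {u u' v v' : ℝ → ℝ}

protected lemma continuousOn (hu : C1On α γ u u') : ContinuousOn u (Icc α γ) :=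
  fun t ht => (hu.1 t ht).continuousWithinAt

protected lemma hasDerivAt (hu : C1On α γ u u') {t : ℝ} (ht : t ∈ Ioo α γ) :
    HasDerivAt u (u' t) t :=
  (hu.1 t (Ioo_subset_Icc_self ht)).hasDerivAt (Icc_mem_nhds ht.1 ht.2)

lemma mono (hu : C1On α γ u u') {α' γ' : ℝ} (hα : α ≤ α') (hγ : γ' ≤ γ) : C1On α' γ' u u' :=
  have hsub := Icc_subset_Icc hα hγ
  ⟨fun t ht => (hu.1 t (hsub ht)).mono hsub, hu.2.mono hsub⟩

lemma strictMonoOn_of_deriv_pos (hu : C1On α γ u u') (hpos : ∀ t ∈ Ioo α γ, 0 < u' t) :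
    StrictMonoOn u (Icc α γ) := by
  refine strictMonoOn_of_hasDerivWithinAt_pos (f' := u') (convex_Icc α γ) hu.continuousOn ?_ ?_ <;>
    rw [interior_Icc]
  exacts [fun t ht => (hu.hasDerivAt ht).hasDerivWithinAt, hpos]

lemma strictAntiOn_of_deriv_neg (hu : C1On α γ u u') (hneg : ∀ t ∈ Ioo α γ, u' t < 0) :
    StrictAntiOn u (Icc α γ) := by
  refine strictAntiOn_of_hasDerivWithinAt_neg (f' := u') (convex_Icc α γ) hu.continuousOn ?_ ?_ <;>
    rw [interior_Icc]
  exacts [fun t ht => (hu.hasDerivAt ht).hasDerivWithinAt, hneg]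

lemma of_primitive {k : ℝ → ℝ} (hk : ContinuousOn k (Icc α γ)) :
    C1On α γ (fun t => ∫ s in α..t, k s) k := by
  refine ⟨fun t ht => ?_, hk⟩
  have : Fact (t ∈ Icc α γ) := ⟨ht⟩
  refine intervalIntegral.integral_hasDerivWithinAt_right (t := Icc α γ) ?_
    (hk.stronglyMeasurableAtFilter_nhdsWithin measurableSet_Icc t) (hk t ht)
  exact (hk.mono (Icc_subset_Icc_right ht.2)).intervalIntegrable_of_Icc ht.1

lemma integral_mul_deriv_eq (hαγ : α ≤ γ) (hu : C1On α γ u u') (hv : C1On α γ v v') :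
    ∫ t in α..γ, u t * v' t = u γ * v γ - u α * v α - ∫ t in α..γ, u' t * v t :=
  intervalIntegral.integral_mul_deriv_eq_deriv_mul_of_hasDerivWithinAt
    (by simpa only [uIcc_of_le hαγ] using hu.1) (by simpa only [uIcc_of_le hαγ] using hv.1)
    (hu.2.intervalIntegrable_of_Icc hαγ) (hv.2.intervalIntegrable_of_Icc hαγ)

lemma exists_deriv_ne_zero (hu : C1On α γ u u') {x y : ℝ} (hx : x ∈ Icc α γ) (hy : y ∈ Icc α γ)
    (hxy : u x ≠ u y) : ∃ t ∈ Icc α γ, u' t ≠ 0 := by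
  by_contra! h
  have hconst : ∀ t ∈ Icc α γ, u t = u α :=
    constant_of_has_deriv_right_zero hu.continuousOn fun t ht =>
      h t (Ico_subset_Icc_self ht) ▸
        (hu.1 t (Ico_subset_Icc_self ht)).mono_of_mem_nhdsWithin (Icc_mem_nhdsGE_of_mem ht)
  exact hxy ((hconst x hx).trans (hconst y hy).symm)

end C1On

section DuBoisReymond

variable {L : ℝ} {f g : ℝ → ℝ}

lemma exists_eqOn_const_of_forall_integral_mul_deriv_eq_zero (hL : 0 < L)
    (hf : ContinuousOn f (Icc 0 L))
    (h : ∀ φ φ' : ℝ → ℝ, Adm L φ φ' → ∫ t in (0 : ℝ)..L, f t * φ' t = 0) :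
    ∃ c, EqOn f (fun _ => c) (Icc 0 L) := by
  set c := (∫ t in (0 : ℝ)..L, f t) / L with hc
  have hk : ContinuousOn (fun t => f t - c) (Icc 0 L) := hf.sub continuousOn_const
  have hint {k : ℝ → ℝ} (hk : ContinuousOn k (Icc 0 L)) :
      IntervalIntegrable k MeasureTheory.volume 0 L := hk.intervalIntegrable_of_Icc hL.le
  have hmean : ∫ t in (0 : ℝ)..L, (f t - c) = 0 := by
    rw [intervalIntegral.integral_sub (hint hf) (hint continuousOn_const),
      intervalIntegral.integral_const, smul_eq_mul, sub_zero, hc,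
      mul_div_cancel₀ _ hL.ne', sub_self]
  have hsq : ∫ t in (0 : ℝ)..L, (f t - c) * (f t - c) = 0 := by
    simp only [sub_mul _ c (f _ - c)]
    rw [intervalIntegral.integral_sub (hint (k := fun t => f t * (f t - c)) (hf.mul hk))
        (hint (k := fun t => c * (f t - c)) (continuousOn_const.mul hk)),
      h _ _ ⟨C1On.of_primitive hk, intervalIntegral.integral_same, hmean⟩,
      intervalIntegral.integral_const_mul, hmean, mul_zero, sub_zero]
  refine ⟨c, fun t ht => ?_⟩
  by_contra hne
  have hpos := intervalIntegral.integral_pos hL (hk.mul hk) (fun x _ => mul_self_nonneg _)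
    ⟨t, ht, mul_self_pos.2 (sub_ne_zero.2 hne)⟩
  exact hpos.ne' hsq

lemma c1On_neg_of_forall_integral_mul_deriv_eq (hL : 0 < L) (hf : ContinuousOn f (Icc 0 L))
    (hg : ContinuousOn g (Icc 0 L))
    (h : ∀ φ φ' : ℝ → ℝ, Adm L φ φ' →
      ∫ t in (0 : ℝ)..L, f t * φ' t = ∫ t in (0 : ℝ)..L, g t * φ t) :
    C1On 0 L f (fun t => -g t) := by
  have hG := C1On.of_primitive hg
  set G := fun t => ∫ s in (0 : ℝ)..t, g s
  obtain ⟨c, hc⟩ := exists_eqOn_const_of_forall_integral_mul_deriv_eq_zero hL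
    (hf.add hG.continuousOn) fun φ φ' hφ => by
      simp only [Pi.add_apply, add_mul]
      rw [intervalIntegral.integral_add, h φ φ' hφ, hG.integral_mul_deriv_eq hL.le hφ.1,
        hφ.2.1, hφ.2.2, mul_zero, mul_zero, sub_zero, zero_sub, add_neg_cancel]
      exacts [(hf.mul hφ.1.2).intervalIntegrable_of_Icc hL.le,
        (hG.continuousOn.mul hφ.1.2).intervalIntegrable_of_Icc hL.le]
  refine ⟨fun t ht => ?_, hg.neg⟩
  have hfG : EqOn f (fun s => c - G s) (Icc 0 L) := fun s hs => eq_sub_of_add_eq (hc hs)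
  exact ((hG.1 t ht).const_sub c).congr_of_mem hfG ht

end DuBoisReymond

section TravelTime

open MeasureTheory

/-- The speed of a particle at position `x` that comes to rest at position `M` while moving against
the force `f`, its kinetic energy at speed `s` being `s ^ p / q` with `q` the conjugate exponent
of `p`. It is used with `s = a u'` on the rising part and `s = -b u'` on the falling part of a
solution. -/
noncomputable def stoppingSpeed (p : ℝ) (f : ℝ → ℝ) (M x : ℝ) : ℝ :=
  (p.conjExponent * ∫ r in x..M, f r) ^ p⁻¹

lemma setIntegral_image_inv_eq {v v' h : ℝ → ℝ} {S : Set ℝ} {c : ℝ} (hS : MeasurableSet S)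
    (hv : ∀ t ∈ S, HasDerivAt v (v' t) t) (hinj : InjOn v S) (hne : ∀ t ∈ S, v' t ≠ 0)
    (hspeed : ∀ t ∈ S, c * |v' t| = h (v t)) :
    ∫ r in v '' S, (h r)⁻¹ = volume.real S / c := by
  rw [integral_image_eq_integral_abs_deriv_smul hS (fun t ht => (hv t ht).hasDerivWithinAt) hinj]
  calc ∫ t in S, |v' t| • (h (v t))⁻¹ = ∫ _ in S, c⁻¹ := by
        refine setIntegral_congr_fun hS fun t ht => ?_
        have habs : |v' t| ≠ 0 := abs_ne_zero.2 (hne t ht)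
        simp only [smul_eq_mul, ← hspeed t ht, mul_inv_rev, mul_inv_cancel_left₀ habs]
    _ = volume.real S / c := by rw [setIntegral_const, smul_eq_mul, div_eq_mul_inv]

namespace C1On

variable {α γ c : ℝ} {u u' h : ℝ → ℝ}

lemma setIntegral_inv_of_deriv_pos (hu : C1On α γ u u') (hαγ : α ≤ γ)
    (hpos : ∀ t ∈ Ioo α γ, 0 < u' t) (hspeed : ∀ t ∈ Ioo α γ, c * u' t = h (u t)) :
    ∫ r in Ioo (u α) (u γ), (h r)⁻¹ = (γ - α) / c := by
  have hmono := hu.strictMonoOn_of_deriv_pos hpos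
  rw [← (intermediate_value_Ioo hαγ hu.continuousOn).antisymm' hmono.image_Ioo_subset,
    setIntegral_image_inv_eq measurableSet_Ioo (fun t => hu.hasDerivAt)
      (hmono.injOn.mono Ioo_subset_Icc_self) (fun t ht => (hpos t ht).ne')
      (fun t ht => by rw [abs_of_pos (hpos t ht), hspeed t ht]),
    Real.volume_real_Ioo_of_le hαγ]

lemma setIntegral_inv_of_deriv_neg (hu : C1On α γ u u') (hαγ : α ≤ γ)
    (hneg : ∀ t ∈ Ioo α γ, u' t < 0) (hspeed : ∀ t ∈ Ioo α γ, c * -u' t = h (u t)) :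
    ∫ r in Ioo (u γ) (u α), (h r)⁻¹ = (γ - α) / c := by
  have hanti := hu.strictAntiOn_of_deriv_neg hneg
  rw [← (intermediate_value_Ioo' hαγ hu.continuousOn).antisymm' hanti.image_Ioo_subset,
    setIntegral_image_inv_eq measurableSet_Ioo (fun t => hu.hasDerivAt)
      (hanti.injOn.mono Ioo_subset_Icc_self) (fun t ht => (hneg t ht).ne)
      (fun t ht => by rw [abs_of_neg (hneg t ht), hspeed t ht]),
    Real.volume_real_Ioo_of_le hαγ]

end C1On

end TravelTime

namespace IsWeakSol

variable {p a b L : ℝ} {u u' g f : ℝ → ℝ}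

lemma c1On_asymFlux (hsol : IsWeakSol p a b L u u' g) (hp : 1 < p) (hL : 0 < L)
    (hg : ContinuousOn g (Icc 0 L)) :
    C1On 0 L (fun t => asymFlux p a b (u' t)) (fun t => -g t) :=
  c1On_neg_of_forall_integral_mul_deriv_eq hL
    ((continuous_asymFlux a b hp).comp_continuousOn hsol.1.1.2) hg hsol.2

lemma exists_source_mul_pos (hsol : IsWeakSol p a b L u u' g) (hp : 1 < p) (ha : 0 < a)
    (hb : 0 < b) (hL : 0 < L) (hu : ∃ t ∈ Icc 0 L, u t ≠ 0) : ∃ t ∈ Icc 0 L, 0 < g t * u t := by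
  by_contra! hneg
  obtain ⟨⟨hC1, hu0, -⟩, hweak⟩ := id hsol
  obtain ⟨x, hx, hux⟩ := hu
  obtain ⟨t, ht, hut⟩ := hC1.exists_deriv_ne_zero hx (left_mem_Icc.2 hL.le) (by rwa [hu0])
  have henergy : 0 < ∫ t in (0 : ℝ)..L, asymFlux p a b (u' t) * u' t := by
    refine intervalIntegral.integral_pos hL
      (((continuous_asymFlux a b hp).comp_continuousOn hC1.2).mul hC1.2) (fun s _ => ?_)
      ⟨t, ht, asymFlux_mul_self_pos hp ha hb hut⟩
    rcases eq_or_ne (u' s) 0 with hs | hs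
    · rw [hs, mul_zero]
    · exact (asymFlux_mul_self_pos hp ha hb hs).le
  rw [hweak u u' hsol.1] at henergy
  have hnonneg := intervalIntegral.integral_nonneg (μ := MeasureTheory.volume) hL.le
    fun t ht => neg_nonneg.2 (hneg t ht)
  rw [intervalIntegral.integral_neg] at hnonneg
  linarith

lemma strictAntiOn_deriv (hsol : IsWeakSol p a b L u u' g) (hp : 1 < p) (ha : 0 < a) (hb : 0 < b)
    (hL : 0 < L) (hg : ContinuousOn g (Icc 0 L)) (hg_pos : ∀ t ∈ Ioo 0 L, 0 < g t) :
    StrictAntiOn u' (Icc 0 L) := by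
  have hanti := (hsol.c1On_asymFlux hp hL hg).strictAntiOn_of_deriv_neg fun t ht =>
    neg_neg_of_pos (hg_pos t ht)
  exact fun s hs t ht hst => (strictMono_asymFlux hp ha hb).lt_iff_lt.1 (hanti hs ht hst)

section Autonomous

variable (hsol : IsWeakSol p a b L u u' (fun t => f (u t))) (hp : 1 < p) (ha : 0 < a) (hb : 0 < b)
  (hL : 0 < L) (hf : Continuous f)

include hsol hp ha hb hL hf

lemma asymE_deriv_add_eq {t : ℝ} (ht : t ∈ Icc 0 L) :
    asymE p a b (u' t) + p.conjExponent * ∫ r in (0 : ℝ)..u t, f r =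
      asymE p a b (u' 0) + p.conjExponent * ∫ r in (0 : ℝ)..u 0, f r := by
  have hpq := Real.HolderConjugate.conjExponent hp
  set q := p.conjExponent
  have hu := hsol.1.1
  have hflux := hsol.c1On_asymFlux hp hL (hf.comp_continuousOn hu.continuousOn)
  have hderiv : ∀ s ∈ Icc 0 L, HasDerivWithinAt
      (fun s => asymE p a b (u' s) + q * ∫ r in (0 : ℝ)..u s, f r) 0 (Icc 0 L) s := by
    intro s hs
    have hkin := (hasDerivAt_asymE a⁻¹ b⁻¹ hpq.symm.lt _).comp_hasDerivWithinAt s (hflux.1 s hs)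
    have hpot := ((hf.integral_hasStrictDerivAt 0 (u s)).hasDerivAt.comp_hasDerivWithinAt s
      (hu.1 s hs)).const_mul q
    simp only [Function.comp_def, asymE_inv_asymFlux hpq ha hb,
      asymFlux_inv_asymFlux hpq ha hb] at hkin hpot
    exact (hkin.add hpot).congr_deriv (by ring)
  exact constant_of_derivWithin_zero (fun s hs => (hderiv s hs).differentiableWithinAt)
    (fun s hs => (hderiv s (Ico_subset_Icc_self hs)).derivWithin
      (uniqueDiffOn_Icc hL s (Ico_subset_Icc_self hs))) t ht

lemma asymE_deriv_eq_of_deriv_eq_zero {τ t : ℝ} (hτ : τ ∈ Icc 0 L) (hτ0 : u' τ = 0)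
    (ht : t ∈ Icc 0 L) : asymE p a b (u' t) = p.conjExponent * ∫ r in u t..u τ, f r := by
  have hE := (hsol.asymE_deriv_add_eq hp ha hb hL hf ht).trans
    (hsol.asymE_deriv_add_eq hp ha hb hL hf hτ).symm
  rw [hτ0, asymE_of_nonneg b hp ha.le le_rfl, mul_zero, Real.zero_rpow (by linarith)] at hE
  rw [← intervalIntegral.integral_interval_sub_left (hf.intervalIntegrable 0 (u τ))
    (hf.intervalIntegrable 0 (u t)), mul_sub]
  linarith

lemma mul_deriv_eq_stoppingSpeed {τ t : ℝ} (hτ : τ ∈ Icc 0 L) (hτ0 : u' τ = 0)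
    (ht : t ∈ Icc 0 L) (hut : 0 ≤ u' t) : a * u' t = stoppingSpeed p f (u τ) (u t) := by
  rw [stoppingSpeed, ← hsol.asymE_deriv_eq_of_deriv_eq_zero hp ha hb hL hf hτ hτ0 ht,
    asymE_of_nonneg b hp ha.le hut, Real.rpow_rpow_inv (by positivity) (by linarith)]

lemma mul_neg_deriv_eq_stoppingSpeed {τ t : ℝ} (hτ : τ ∈ Icc 0 L) (hτ0 : u' τ = 0)
    (ht : t ∈ Icc 0 L) (hut : u' t ≤ 0) : b * -u' t = stoppingSpeed p f (u τ) (u t) := by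
  have hut' := neg_nonneg.2 hut
  rw [stoppingSpeed, ← hsol.asymE_deriv_eq_of_deriv_eq_zero hp ha hb hL hf hτ hτ0 ht,
    asymE_of_nonpos a hp hb.le hut, Real.rpow_rpow_inv (by positivity) (by linarith)]

lemma div_eq_sub_div_of_deriv_eq_zero {τ : ℝ} (hτ : τ ∈ Icc 0 L) (hτ0 : u' τ = 0)
    (hrise : ∀ t ∈ Ioo 0 τ, 0 < u' t) (hfall : ∀ t ∈ Ioo τ L, u' t < 0) :
    τ / a = (L - τ) / b := by
  obtain ⟨⟨hu, hu0, huL⟩, -⟩ := id hsol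
  have hrise_time := (hu.mono le_rfl hτ.2).setIntegral_inv_of_deriv_pos hτ.1 hrise fun t ht =>
    hsol.mul_deriv_eq_stoppingSpeed hp ha hb hL hf hτ hτ0 ⟨ht.1.le, ht.2.le.trans hτ.2⟩
      (hrise t ht).le
  have hfall_time := (hu.mono hτ.1 le_rfl).setIntegral_inv_of_deriv_neg hτ.2 hfall fun t ht =>
    hsol.mul_neg_deriv_eq_stoppingSpeed hp ha hb hL hf hτ hτ0 ⟨hτ.1.trans ht.1.le, ht.2.le⟩
      (hfall t ht).le
  rw [hu0, sub_zero] at hrise_time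
  rw [huL] at hfall_time
  exact hrise_time.symm.trans hfall_time

end Autonomous

end IsWeakSol

theorem stmt3_general {p a b L : ℝ} (hp : 1 < p) (ha : 0 < a) (hb : 0 < b) (hL : 0 < L)
    {f u u' : ℝ → ℝ} (hf : Continuous f) (hf_sign : ∀ r > 0, ∀ s > 0, 0 < f r → 0 < f s)
    (hsol : IsWeakSol p a b L u u' (fun t => f (u t))) (hpos : ∀ t ∈ Ioo 0 L, 0 < u t) :
    (∀ t ∈ Ioo 0 (a * L / (a + b)), 0 < u' t) ∧
    u' (a * L / (a + b)) = 0 ∧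
    (∀ t ∈ Ioo (a * L / (a + b)) L, u' t < 0) := by
  obtain ⟨⟨hu, hu0, huL⟩, -⟩ := id hsol
  have hsource : ∀ t ∈ Ioo 0 L, 0 < f (u t) := by
    obtain ⟨m, hm⟩ := nonempty_Ioo.2 hL
    obtain ⟨s, hs, hfs⟩ := hsol.exists_source_mul_pos hp ha hb hL
      ⟨m, Ioo_subset_Icc_self hm, (hpos m hm).ne'⟩
    have hs' : s ∈ Ioo 0 L := by
      refine ⟨hs.1.lt_of_ne ?_, hs.2.lt_of_ne ?_⟩ <;> rintro rfl <;>
        simp only [hu0, huL, mul_zero, lt_irrefl] at hfs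
    exact fun t ht => hf_sign _ (hpos s hs') _ (hpos t ht) (pos_of_mul_pos_left hfs (hpos s hs').le)
  have hanti := hsol.strictAntiOn_deriv hp ha hb hL (hf.comp_continuousOn hu.continuousOn) hsource
  obtain ⟨τ, hτ, hτ0⟩ := exists_hasDerivAt_eq_zero hL hu.continuousOn (hu0.trans huL.symm)
    fun t => hu.hasDerivAt
  have hτ' := Ioo_subset_Icc_self hτ
  have hrise : ∀ t ∈ Ioo 0 τ, 0 < u' t := fun t ht =>
    hτ0 ▸ hanti ⟨ht.1.le, ht.2.le.trans hτ.2.le⟩ hτ' ht.2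
  have hfall : ∀ t ∈ Ioo τ L, u' t < 0 := fun t ht =>
    hτ0 ▸ hanti hτ' ⟨hτ.1.le.trans ht.1.le, ht.2.le⟩ ht.1
  have htime := hsol.div_eq_sub_div_of_deriv_eq_zero hp ha hb hL hf hτ' hτ0 hrise hfall
  have hτ_eq : a * L / (a + b) = τ := by
    rw [div_eq_div_iff ha.ne' hb.ne'] at htime
    rw [div_eq_iff (by positivity)]
    linarith
  rw [hτ_eq]
  exact ⟨hrise, hτ0, hfall⟩

theorem stmt3 (p a b L : ℝ) (hp : 1 < p) (ha : 0 < a) (hb : 0 < b) (hL : 0 < L)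
    (u u' : ℝ → ℝ)
    (hsol : IsWeakSol p a b L u u' (fun t => lam1 p a b L * |u t| ^ (p - 2) * u t))
    (hpos : ∀ t ∈ Set.Ioo (0:ℝ) L, 0 < u t) :
    (∀ t ∈ Set.Ioo (0:ℝ) (a * L / (a + b)), 0 < u' t) ∧
    u' (a * L / (a + b)) = 0 ∧
    (∀ t ∈ Set.Ioo (a * L / (a + b)) L, u' t < 0) :=
  stmt3_general (f := fun s => lam1 p a b L * asymFlux p 1 1 s) hp ha hb hL
    (continuous_const.mul (continuous_asymFlux 1 1 hp))
    (fun r hr s hs h => mul_pos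
      (pos_of_mul_pos_left h ((asymFlux_pos_iff hp one_pos one_pos).2 hr).le)
      ((asymFlux_pos_iff hp one_pos one_pos).2 hs))
    (by simpa only [mul_assoc, abs_rpow_sub_two_mul_self hp] using hsol) hpos
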